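/- arXiv:2605.10742 — 4 statements merged into one kernel-verified Lean document; each statement's English description precedes it below -/
import Mathlib

section
/- Let H be a complex Hilbert space, let A be a bounded positive operator on H with m·I ≤ A ≤ M·I for some 0 < m ≤ M, and let x ∈ H be a unit vector. Then 0 ≤ re⟪A x, x⟫ − Δ_x(A) ≤ C(m,M), where C(m,M) := ((M−m)/(log M − log m))·log S(M/m) if m < M and C(m,M) := 0 if m = M, and S(h) := (h−1)·h^{1/(h−1)}/(e·log h) for h > 1 with S(1) := 1 is Specht's ratio. -/
noncomputable section

open ContinuousLinearMap

variable {H : Type*} [NormedAddCommGroup H] [InnerProductSpace ℂ H] [CompleteSpace H]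

/-- The operator logarithm, defined via the continuous functional calculus. -/
def opLog (A : H →L[ℂ] H) : H →L[ℂ] H := cfc Real.log A

/-- The Fujii–Seo determinant `Δ_x(A) = exp (re⟪(log A) x, x⟫)` of a strictly positive
operator `A` at a vector `x`. -/
def fsDet (A : H →L[ℂ] H) (x : H) : ℝ :=
  Real.exp ((opLog A).reApplyInnerSelf x)

/-- Specht's ratio `S(h) = (h - 1) * h ^ (1 / (h - 1)) / (e * log h)` for `h ≠ 1`,
with `S(1) = 1`. -/
def spechtRatio (h : ℝ) : ℝ :=
  if h = 1 then 1 else (h - 1) * h ^ ((1 : ℝ) / (h - 1)) / (Real.exp 1 * Real.log h)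

/-- The additive constant `C(m,M) = ((M - m)/(log M - log m)) * log S(M/m)` for `m < M`,
and `C(m,m) = 0`. -/
def fsAddConst (m M : ℝ) : ℝ :=
  if m = M then 0
  else ((M - m) / (Real.log M - Real.log m)) * Real.log (spechtRatio (M / m))

/-!
An inequality between functions on the spectrum passes to the functional calculus and hence to the
vector state `T ↦ re⟪T x, x⟫`, so affine bounds on `log` become bounds relating
`L = re⟪(log A) x, x⟫` to `a = re⟪A x, x⟫`. The tangent of `log` at `a` gives `L ≤ log a`, which is
the lower estimate. The secant of `log` through `m` and `M` has slope `1 / D`, where `D` is the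
logarithmic mean of `m` and `M`, so `a ≤ m + D * (L - log m)`. Subtracting the tangent inequality
`D * (L - log D + 1) ≤ exp L`, whose left side has the same slope `D` in `L`, leaves a constant, and
that constant is `C(m,M)`.
-/

section LogarithmicMean

/-- The logarithmic mean `(b - a) / (log b - log a)` of two distinct positive numbers, the
reciprocal of the slope of the secant of `log` through them. On the diagonal it is `0` by division
by zero instead of the customary value `a`. -/
def logMean (a b : ℝ) : ℝ := (b - a) / (Real.log b - Real.log a)

theorem logMean_pos {a b : ℝ} (ha : 0 < a) (hb : 0 < b) (hab : a ≠ b) : 0 < logMean a b := by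
  rcases hab.lt_or_gt with h | h
  · exact div_pos (sub_pos.2 h) (sub_pos.2 (Real.log_lt_log ha h))
  · exact div_pos_of_neg_of_neg (sub_neg.2 h) (sub_neg.2 (Real.log_lt_log hb h))

theorem slope_log (a b : ℝ) : slope Real.log a b = (logMean a b)⁻¹ := by
  rw [slope_def_field, logMean, inv_div]

theorem logMean_one_div {a b : ℝ} (ha : 0 < a) (hb : 0 < b) :
    logMean 1 (b / a) = logMean a b / a := by
  rw [logMean, logMean, Real.log_one, sub_zero, Real.log_div hb.ne' ha.ne', div_sub_one ha.ne',
    div_right_comm]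

theorem spechtRatio_eq_logMean_mul_exp {h : ℝ} (hpos : 0 < h) (hne : h ≠ 1) :
    spechtRatio h = logMean 1 h * Real.exp ((logMean 1 h)⁻¹ - 1) := by
  rw [spechtRatio, if_neg hne, logMean, Real.log_one, sub_zero, inv_div,
    Real.rpow_def_of_pos hpos, mul_one_div, Real.exp_sub]
  ring

theorem fsAddConst_eq_logMean_mul {m M : ℝ} (hm : 0 < m) (hM : 0 < M) (hne : m ≠ M) :
    fsAddConst m M =
      logMean m M * (Real.log (logMean m M) - Real.log m + m / logMean m M - 1) := by
  have hratio : M / m ≠ 1 := fun h => hne ((div_eq_one_iff_eq hm.ne').1 h).symm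
  have hD : 0 < logMean m M := logMean_pos hm hM hne
  rw [fsAddConst, if_neg hne, ← logMean,
    spechtRatio_eq_logMean_mul_exp (div_pos hM hm) hratio, logMean_one_div hm hM, inv_div,
    Real.log_mul (div_pos hD hm).ne' (Real.exp_ne_zero _), Real.log_exp,
    Real.log_div hD.ne' hm.ne', add_sub_assoc]

end LogarithmicMean

section ScalarInequalities

theorem log_le_log_add_div_sub_one {s t : ℝ} (hs : 0 < s) (ht : 0 < t) :
    Real.log t ≤ Real.log s + (t / s - 1) := by
  have h := Real.log_le_sub_one_of_pos (div_pos ht hs)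
  rw [Real.log_div ht.ne' hs.ne'] at h
  linarith

theorem mul_sub_log_add_one_le_exp {s : ℝ} (hs : 0 < s) (t : ℝ) :
    s * (t - Real.log s + 1) ≤ Real.exp t := by
  have h := mul_le_mul_of_nonneg_left (Real.add_one_le_exp (t - Real.log s)) hs.le
  rwa [Real.exp_sub, Real.exp_log hs, mul_div_cancel₀ _ hs.ne'] at h

theorem secant_le_of_concaveOn_Icc {𝕜 : Type*} [Field 𝕜] [LinearOrder 𝕜] [IsStrictOrderedRing 𝕜]
    {f : 𝕜 → 𝕜} {m M t : 𝕜} (hf : ConcaveOn 𝕜 (Set.Icc m M) f) (ht : t ∈ Set.Icc m M) :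
    slope f m M * (t - m) + f m ≤ f t := by
  obtain ⟨hmt, htM⟩ := ht
  rcases hmt.eq_or_lt with rfl | hlt
  · simp
  have hslope : slope f m M ≤ slope f m t :=
    hf.slope_anti ⟨le_rfl, hmt.trans htM⟩ ⟨⟨hmt, htM⟩, hlt.ne'⟩
      ⟨⟨hmt.trans htM, le_rfl⟩, (hlt.trans_le htM).ne'⟩ htM
  calc slope f m M * (t - m) + f m
      ≤ slope f m t * (t - m) + f m := by gcongr
    _ = f t := by rw [mul_comm, ← smul_eq_mul, sub_smul_slope, vsub_eq_sub, sub_add_cancel]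

end ScalarInequalities

section Spectrum

variable {R : Type*} [TopologicalSpace R] [Ring R] [StarRing R] [PartialOrder R]
  [StarOrderedRing R] [Algebra ℝ R] [ContinuousFunctionalCalculus ℝ R IsSelfAdjoint]
  [NonnegSpectrumClass ℝ R] {r : R} {m M : ℝ}

theorem spectrum_subset_Icc_iff (hr : IsSelfAdjoint r) :
    spectrum ℝ r ⊆ Set.Icc m M ↔ r ∈ Set.Icc (algebraMap ℝ R m) (algebraMap ℝ R M) := by
  rw [Set.mem_Icc, algebraMap_le_iff_le_spectrum hr, le_algebraMap_iff_spectrum_le hr,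
    ← forall₂_and]
  rfl

theorem isStrictlyPositive_of_spectrum_subset_Icc (hm : 0 < m) (hr : IsSelfAdjoint r)
    (hspec : spectrum ℝ r ⊆ Set.Icc m M) : IsStrictlyPositive r :=
  (StarOrderedRing.isStrictlyPositive_iff_spectrum_pos r).2 fun _ ht => hm.trans_le (hspec ht).1

end Spectrum

section QuadraticForm

variable {𝕜 E : Type*} [RCLike 𝕜] [NormedAddCommGroup E] [InnerProductSpace 𝕜 E]

theorem reApplyInnerSelf_mono {S T : E →L[𝕜] E} (h : S ≤ T) (x : E) :
    S.reApplyInnerSelf x ≤ T.reApplyInnerSelf x := by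
  have hx := ((ContinuousLinearMap.le_def S T).1 h).re_inner_nonneg_left x
  rwa [sub_apply, inner_sub_left, map_sub, sub_nonneg] at hx

theorem reApplyInnerSelf_smul_add_algebraMap (T : E →L[𝕜] E) (a b : ℝ) {x : E} (hx : ‖x‖ = 1) :
    ((a : 𝕜) • T + algebraMap 𝕜 (E →L[𝕜] E) b).reApplyInnerSelf x =
      a * T.reApplyInnerSelf x + b := by
  simp [reApplyInnerSelf_apply, ContinuousLinearMap.algebraMap_apply, inner_add_left,
    inner_smul_left, hx]

end QuadraticForm

section VectorState

variable {A : H →L[ℂ] H} {f : ℝ → ℝ} {a b m M : ℝ} {x : H}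

theorem reApplyInnerSelf_cfc_affine (hA : IsSelfAdjoint A) (a b : ℝ) (hx : ‖x‖ = 1) :
    (cfc (fun t : ℝ => a * t + b) A).reApplyInnerSelf x = a * A.reApplyInnerSelf x + b := by
  rw [cfc_add_const b (fun t => a * t) A, cfc_const_mul_id a A,
    IsScalarTower.algebraMap_apply ℝ ℂ (H →L[ℂ] H), ← Complex.coe_smul]
  exact reApplyInnerSelf_smul_add_algebraMap A a b hx

theorem reApplyInnerSelf_cfc_le_of_le_affine (hA : IsSelfAdjoint A)
    (hf : ContinuousOn f (spectrum ℝ A)) (h : ∀ t ∈ spectrum ℝ A, f t ≤ a * t + b)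
    (hx : ‖x‖ = 1) : (cfc f A).reApplyInnerSelf x ≤ a * A.reApplyInnerSelf x + b := by
  rw [← reApplyInnerSelf_cfc_affine hA a b hx]
  exact reApplyInnerSelf_mono (cfc_mono h) x

theorem le_reApplyInnerSelf_cfc_of_affine_le (hA : IsSelfAdjoint A)
    (hf : ContinuousOn f (spectrum ℝ A)) (h : ∀ t ∈ spectrum ℝ A, a * t + b ≤ f t)
    (hx : ‖x‖ = 1) : a * A.reApplyInnerSelf x + b ≤ (cfc f A).reApplyInnerSelf x := by
  rw [← reApplyInnerSelf_cfc_affine hA a b hx]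
  exact reApplyInnerSelf_mono (cfc_mono h) x

theorem secant_le_reApplyInnerSelf_cfc (hA : IsSelfAdjoint A)
    (hspec : spectrum ℝ A ⊆ Set.Icc m M) (hf : ConcaveOn ℝ (Set.Icc m M) f)
    (hfc : ContinuousOn f (spectrum ℝ A)) (hx : ‖x‖ = 1) :
    slope f m M * (A.reApplyInnerSelf x - m) + f m ≤ (cfc f A).reApplyInnerSelf x := by
  have h := le_reApplyInnerSelf_cfc_of_affine_le (a := slope f m M) (b := f m - slope f m M * m)
    hA hfc (fun t ht => by linarith [secant_le_of_concaveOn_Icc hf (hspec ht)]) hx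
  linarith

theorem reApplyInnerSelf_mem_Icc (hA : IsSelfAdjoint A) (hspec : spectrum ℝ A ⊆ Set.Icc m M)
    (hx : ‖x‖ = 1) : A.reApplyInnerSelf x ∈ Set.Icc m M := by
  have hlow := le_reApplyInnerSelf_cfc_of_affine_le (f := id) (a := 0) (b := m) hA
    continuousOn_id (fun t ht => by simpa using (hspec ht).1) hx
  have hupp := reApplyInnerSelf_cfc_le_of_le_affine (f := id) (a := 0) (b := M) hA
    continuousOn_id (fun t ht => by simpa using (hspec ht).2) hx
  rw [cfc_id ℝ A, zero_mul, zero_add] at hlow hupp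
  exact ⟨hlow, hupp⟩

end VectorState

section Determinant

variable {A : H →L[ℂ] H} {m M : ℝ} {x : H}

theorem continuousOn_log_spectrum (hA : IsStrictlyPositive A) :
    ContinuousOn Real.log (spectrum ℝ A) :=
  Real.continuousOn_log.mono fun _ ht => (hA.spectrum_pos ht).ne'

theorem reApplyInnerSelf_pos (hA : IsStrictlyPositive A) (hx : ‖x‖ = 1) :
    0 < A.reApplyInnerSelf x := by
  have : Nontrivial H := ⟨x, 0, norm_ne_zero_iff.1 (hx ▸ one_ne_zero)⟩
  obtain ⟨r, hr, hrA⟩ := (CFC.exists_pos_algebraMap_le_iff hA.isSelfAdjoint).2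
    fun _ ht => hA.spectrum_pos ht
  have hspec : spectrum ℝ A ⊆ Set.Icc r ‖A‖ := (spectrum_subset_Icc_iff hA.isSelfAdjoint).2
    ⟨hrA, hA.isSelfAdjoint.le_algebraMap_norm_self⟩
  exact hr.trans_le (reApplyInnerSelf_mem_Icc hA.isSelfAdjoint hspec hx).1

theorem reApplyInnerSelf_opLog_le_log (hA : IsStrictlyPositive A) (hx : ‖x‖ = 1) :
    (opLog A).reApplyInnerSelf x ≤ Real.log (A.reApplyInnerSelf x) := by
  set s := A.reApplyInnerSelf x
  have hs_pos : 0 < s := reApplyInnerSelf_pos hA hx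
  calc (opLog A).reApplyInnerSelf x
      ≤ s⁻¹ * s + (Real.log s - 1) :=
        reApplyInnerSelf_cfc_le_of_le_affine hA.isSelfAdjoint (continuousOn_log_spectrum hA)
          (fun t ht => by
            linarith [log_le_log_add_div_sub_one hs_pos (hA.spectrum_pos ht),
              div_eq_inv_mul t s]) hx
    _ = Real.log s := by rw [inv_mul_cancel₀ hs_pos.ne', add_sub_cancel]

theorem fsDet_le_reApplyInnerSelf (hA : IsStrictlyPositive A) (hx : ‖x‖ = 1) :
    fsDet A x ≤ A.reApplyInnerSelf x :=
  (Real.le_log_iff_exp_le (reApplyInnerSelf_pos hA hx)).1 (reApplyInnerSelf_opLog_le_log hA hx)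

theorem secant_le_reApplyInnerSelf_opLog (hm : 0 < m) (hA : IsSelfAdjoint A)
    (hspec : spectrum ℝ A ⊆ Set.Icc m M) (hx : ‖x‖ = 1) :
    (logMean m M)⁻¹ * (A.reApplyInnerSelf x - m) + Real.log m ≤ (opLog A).reApplyInnerSelf x := by
  rw [← slope_log]
  exact secant_le_reApplyInnerSelf_cfc hA hspec
    (strictConcaveOn_log_Ioi.concaveOn.subset (fun _ ht => hm.trans_le ht.1) (convex_Icc m M))
    (continuousOn_log_spectrum (isStrictlyPositive_of_spectrum_subset_Icc hm hA hspec)) hx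

theorem reApplyInnerSelf_sub_fsDet_le_fsAddConst (hm : 0 < m) (hA : IsSelfAdjoint A)
    (hspec : spectrum ℝ A ⊆ Set.Icc m M) (hx : ‖x‖ = 1) :
    A.reApplyInnerSelf x - fsDet A x ≤ fsAddConst m M := by
  obtain ⟨hma, haM⟩ := reApplyInnerSelf_mem_Icc hA hspec hx
  have hsecant := secant_le_reApplyInnerSelf_opLog hm hA hspec hx
  rw [fsDet]
  set a := A.reApplyInnerSelf x
  set L := (opLog A).reApplyInnerSelf x
  rcases eq_or_ne m M with rfl | hne
  · have hlog : Real.log m ≤ L := by simpa [logMean] using hsecant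
    rw [fsAddConst, if_pos rfl]
    linarith [(Real.log_le_iff_le_exp hm).1 hlog]
  have hM : 0 < M := hm.trans_le (hma.trans haM)
  set D := logMean m M
  have hD : 0 < D := logMean_pos hm hM hne
  have ha : a ≤ m + D * (L - Real.log m) := by
    linarith [(inv_mul_le_iff₀ hD).1 (le_sub_iff_add_le.2 hsecant)]
  calc a - Real.exp L
      ≤ m + D * (L - Real.log m) - D * (L - Real.log D + 1) :=
        sub_le_sub ha (mul_sub_log_add_one_le_exp hD L)
    _ = D * (Real.log D - Real.log m + m / D - 1) := by field
    _ = fsAddConst m M := (fsAddConst_eq_logMean_mul hm hM hne).symm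

end Determinant

/-- If `0 < m ≤ M`, `m • I ≤ A ≤ M • I` and `x` is a unit vector, then
`0 ≤ re⟪A x, x⟫ - Δ_x(A) ≤ C(m, M)`. -/
theorem fujiiSeo_additive_reverse_inequality
    (A : H →L[ℂ] H) (m M : ℝ) (hm : 0 < m) (hmM : m ≤ M)
    (hA : A.IsPositive)
    (hlow : (A - m • 1).IsPositive) (hupp : (M • 1 - A).IsPositive)
    (x : H) (hx : ‖x‖ = 1) :
    0 ≤ A.reApplyInnerSelf x - fsDet A x ∧
      A.reApplyInnerSelf x - fsDet A x ≤ fsAddConst m M := by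
  have hsa : IsSelfAdjoint A := hA.isSelfAdjoint
  have hspec : spectrum ℝ A ⊆ Set.Icc m M := by
    rw [spectrum_subset_Icc_iff hsa, Algebra.algebraMap_eq_smul_one, Algebra.algebraMap_eq_smul_one]
    exact ⟨hlow, hupp⟩
  have hpos : IsStrictlyPositive A := isStrictlyPositive_of_spectrum_subset_Icc hm hsa hspec
  exact ⟨sub_nonneg.2 (fsDet_le_reApplyInnerSelf hpos hx),
    reApplyInnerSelf_sub_fsDet_le_fsAddConst hm hsa hspec hx⟩
end
end

section
/- Let H be a nontrivial complex Hilbert space and let A be a bounded positive operator on H. Then the infimum over unit vectors x of Δ_x(A) equals the infimum over unit vectors x of re⟪A x, x⟫, which equals inf σ(A); and the supremum over unit vectors x of Δ_x(A) equals the supremum over unit vectors x of re⟪A x, x⟫, which equals sup σ(A) = ‖A‖. -/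
noncomputable section

open ContinuousLinearMap

variable {H : Type*} [NormedAddCommGroup H] [InnerProductSpace ℂ H] [CompleteSpace H]

/-- The Fujii–Seo determinant of a (possibly non-invertible) positive operator,
defined as `⨅ ε > 0, Δ_x(A + ε • 1)`. -/
def fsDet₀ (A : H →L[ℂ] H) (x : H) : ℝ :=
  ⨅ ε : {ε : ℝ // 0 < ε}, fsDet (A + (ε : ℝ) • 1) x

/-! Since `log` is increasing, the functional calculus turns bounds on the quadratic form of
`log (A + ε)` over unit vectors into bounds on `t + ε` over `t ∈ σ(A)`. This settles the quadratic
form of `A`, the infimum of `Δ_x(A)`, and the upper bound `Δ_x(A) ≤ sup σ(A)`. For the supremum one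
needs, given `c < sup σ(A)`, a single unit vector `x` with `c ≤ Δ_x(A + ε)` for every `ε > 0`. An
approximate eigenvector is not good enough, since `log ε → -∞` magnifies any component of `x` near
the bottom of the spectrum. Instead `x` is taken in the range of `f(A)` with `f` vanishing on
`(-∞, c]`. -/

section QuadraticForm

variable {𝕜 E : Type*} [RCLike 𝕜] [NormedAddCommGroup E] [InnerProductSpace 𝕜 E]

lemma reApplyInnerSelf_sub (S T : E →L[𝕜] E) (x : E) :
    (S - T).reApplyInnerSelf x = S.reApplyInnerSelf x - T.reApplyInnerSelf x := by
  simp [reApplyInnerSelf_apply, inner_sub_left]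

lemma reApplyInnerSelf_mul_mul_of_isSymmetric {F : E →L[𝕜] E}
    (hF : (F : E →ₗ[𝕜] E).IsSymmetric) (S : E →L[𝕜] E) (y : E) :
    (F * S * F).reApplyInnerSelf y = S.reApplyInnerSelf (F y) := by
  simp only [reApplyInnerSelf_apply, mul_apply_eq_comp]
  exact congrArg RCLike.re (hF (S (F y)) y)

lemma reApplyInnerSelf_eq_norm_sq_mul (T : E →L[𝕜] E) (x : E) :
    T.reApplyInnerSelf x = ‖x‖ ^ 2 * T.reApplyInnerSelf ((‖x‖⁻¹ : 𝕜) • x) := by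
  rcases eq_or_ne x 0 with rfl | hx
  · simp [reApplyInnerSelf_apply]
  · simp [reApplyInnerSelf_smul, field]

lemma isPositive_iff_forall_norm_eq_one {T : E →L[𝕜] E} (hT : (T : E →ₗ[𝕜] E).IsSymmetric) :
    T.IsPositive ↔ ∀ x : E, ‖x‖ = 1 → 0 ≤ T.reApplyInnerSelf x := by
  refine ⟨fun h x _ ↦ h.2 x, fun h ↦ ⟨hT, fun x ↦ ?_⟩⟩
  rcases eq_or_ne x 0 with rfl | hx
  · simp [reApplyInnerSelf_apply]
  · rw [reApplyInnerSelf_eq_norm_sq_mul]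
    exact mul_nonneg (sq_nonneg _) (h _ (norm_smul_inv_norm hx))

lemma le_iff_forall_norm_eq_one {S T : E →L[𝕜] E} (hS : (S : E →ₗ[𝕜] E).IsSymmetric)
    (hT : (T : E →ₗ[𝕜] E).IsSymmetric) :
    S ≤ T ↔ ∀ x : E, ‖x‖ = 1 → S.reApplyInnerSelf x ≤ T.reApplyInnerSelf x := by
  rw [le_def, isPositive_iff_forall_norm_eq_one (by simpa using hT.sub hS)]
  simp only [reApplyInnerSelf_sub, sub_nonneg]

end QuadraticForm

omit [CompleteSpace H] in
lemma reApplyInnerSelf_algebraMap (r : ℝ) (x : H) :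
    (algebraMap ℝ (H →L[ℂ] H) r).reApplyInnerSelf x = r * ‖x‖ ^ 2 := by
  rw [reApplyInnerSelf_apply, ContinuousLinearMap.algebraMap_apply, inner_smul_left_eq_smul,
    RCLike.smul_re, inner_self_eq_norm_sq]

section FunctionalCalculus

variable {A : H →L[ℂ] H} {f g : ℝ → ℝ} {r : ℝ}

lemma forall_le_reApplyInnerSelf_cfc_iff (hA : IsSelfAdjoint A)
    (hg : ContinuousOn g (spectrum ℝ A)) :
    (∀ x : H, ‖x‖ = 1 → r ≤ (cfc g A).reApplyInnerSelf x) ↔ ∀ t ∈ spectrum ℝ A, r ≤ g t := by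
  rw [← algebraMap_le_cfc_iff g r A hg hA, le_iff_forall_norm_eq_one
    (IsSelfAdjoint.algebraMap _ (.all r)).isSymmetric (cfc_predicate g A).isSymmetric]
  refine forall₂_congr fun x hx ↦ ?_
  rw [reApplyInnerSelf_algebraMap, hx, one_pow, mul_one]

lemma forall_reApplyInnerSelf_cfc_le_iff (hA : IsSelfAdjoint A)
    (hg : ContinuousOn g (spectrum ℝ A)) :
    (∀ x : H, ‖x‖ = 1 → (cfc g A).reApplyInnerSelf x ≤ r) ↔ ∀ t ∈ spectrum ℝ A, g t ≤ r := by
  rw [← cfc_le_algebraMap_iff g r A hg hA, le_iff_forall_norm_eq_one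
    (cfc_predicate g A).isSymmetric (IsSelfAdjoint.algebraMap _ (.all r)).isSymmetric]
  refine forall₂_congr fun x hx ↦ ?_
  rw [reApplyInnerSelf_algebraMap, hx, one_pow, mul_one]

lemma forall_le_reApplyInnerSelf_iff (hA : IsSelfAdjoint A) :
    (∀ x : H, ‖x‖ = 1 → r ≤ A.reApplyInnerSelf x) ↔ ∀ t ∈ spectrum ℝ A, r ≤ t := by
  simpa only [cfc_id' ℝ A] using forall_le_reApplyInnerSelf_cfc_iff hA (continuousOn_id' _)

lemma forall_reApplyInnerSelf_le_iff (hA : IsSelfAdjoint A) :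
    (∀ x : H, ‖x‖ = 1 → A.reApplyInnerSelf x ≤ r) ↔ ∀ t ∈ spectrum ℝ A, t ≤ r := by
  simpa only [cfc_id' ℝ A] using forall_reApplyInnerSelf_cfc_le_iff hA (continuousOn_id' _)

lemma cfc_ne_zero_of_mem_spectrum (hA : IsSelfAdjoint A) (hf : ContinuousOn f (spectrum ℝ A))
    {t : ℝ} (ht : t ∈ spectrum ℝ A) (hft : f t ≠ 0) : cfc f A ≠ 0 := by
  rw [← cfc_zero ℝ A]
  exact fun h ↦ hft ((cfc_eq_cfc_iff_eqOn hA hf continuousOn_const).1 h ht)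

lemma mul_norm_sq_le_reApplyInnerSelf_cfc (hA : IsSelfAdjoint A)
    (hf : ContinuousOn f (spectrum ℝ A)) (hg : ContinuousOn g (spectrum ℝ A))
    (h : ∀ t ∈ spectrum ℝ A, f t ≠ 0 → r ≤ g t) (y : H) :
    r * ‖cfc f A y‖ ^ 2 ≤ (cfc g A).reApplyInnerSelf (cfc f A y) := by
  have conj_nonneg : 0 ≤ cfc f A * (cfc g A - algebraMap ℝ (H →L[ℂ] H) r) * cfc f A := by
    rw [← cfc_const r A, ← cfc_sub g _ A, ← cfc_mul f _ A, ← cfc_mul _ f A]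
    refine cfc_nonneg fun t ht ↦ ?_
    rcases eq_or_ne (f t) 0 with hft | hft
    · simp [hft]
    · rw [mul_right_comm]
      exact mul_nonneg (mul_self_nonneg _) (sub_nonneg.2 (h t ht hft))
  have form_nonneg := ((nonneg_iff_isPositive _).1 conj_nonneg).2 y
  rwa [reApplyInnerSelf_mul_mul_of_isSymmetric (cfc_predicate f A).isSymmetric,
    reApplyInnerSelf_sub, reApplyInnerSelf_algebraMap, sub_nonneg] at form_nonneg

-- The vector `x` stands in for a unit vector in the range of the spectral projection of `U`.
lemma exists_norm_eq_one_forall_le_reApplyInnerSelf_cfc (hA : IsSelfAdjoint A) {U : Set ℝ}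
    (hU : IsOpen U) (hAU : (spectrum ℝ A ∩ U).Nonempty) :
    ∃ x : H, ‖x‖ = 1 ∧ ∀ (g : ℝ → ℝ) (r : ℝ), ContinuousOn g (spectrum ℝ A) →
      (∀ t ∈ spectrum ℝ A ∩ U, r ≤ g t) → r ≤ (cfc g A).reApplyInnerSelf x := by
  obtain ⟨a, haA, haU⟩ := hAU
  obtain ⟨f, hf_compl, hf_a, -⟩ := exists_continuous_zero_one_of_isClosed hU.isClosed_compl
    isClosed_singleton (Set.disjoint_singleton_right.2 (Set.notMem_compl_iff.2 haU))
  have hfa : f a ≠ 0 := by simp [hf_a rfl]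
  obtain ⟨y, hy⟩ : ∃ y, cfc f A y ≠ 0 := DFunLike.ne_iff.1
    (cfc_ne_zero_of_mem_spectrum hA f.continuous.continuousOn haA hfa)
  refine ⟨(‖cfc f A y‖⁻¹ : ℂ) • cfc f A y, norm_smul_inv_norm hy, fun g r hg h ↦ ?_⟩
  have hgU : ∀ t ∈ spectrum ℝ A, f t ≠ 0 → r ≤ g t := fun t ht hft ↦
    h t ⟨ht, Set.notMem_compl_iff.1 fun htU ↦ hft (hf_compl htU)⟩
  have unnormalized := mul_norm_sq_le_reApplyInnerSelf_cfc hA f.continuous.continuousOn hg hgU y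
  rw [reApplyInnerSelf_eq_norm_sq_mul, mul_comm] at unnormalized
  exact le_of_mul_le_mul_left unnormalized (by positivity)

end FunctionalCalculus

section Determinant

variable {A : H →L[ℂ] H} {ε r : ℝ}

lemma nonneg_of_mem_spectrum (hA : A.IsPositive) {t : ℝ} (ht : t ∈ spectrum ℝ A) : 0 ≤ t :=
  spectrum_nonneg_of_nonneg ((nonneg_iff_isPositive A).2 hA) ht

lemma add_pos_of_mem_spectrum (hA : A.IsPositive) (hε : 0 < ε) {t : ℝ} (ht : t ∈ spectrum ℝ A) :
    0 < t + ε :=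
  add_pos_of_nonneg_of_pos (nonneg_of_mem_spectrum hA ht) hε

lemma continuousOn_log_add_spectrum (hA : A.IsPositive) (hε : 0 < ε) :
    ContinuousOn (fun t ↦ Real.log (t + ε)) (spectrum ℝ A) :=
  ContinuousOn.log (by fun_prop) fun _ ht ↦ (add_pos_of_mem_spectrum hA hε ht).ne'

lemma opLog_add_smul_one (hA : A.IsPositive) (hε : 0 < ε) :
    opLog (A + ε • 1) = cfc (fun t ↦ Real.log (t + ε)) A := by
  have hsa : IsSelfAdjoint A := hA.isSelfAdjoint
  have shift : cfc (fun t : ℝ ↦ t + ε) A = A + ε • 1 := by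
    rw [cfc_add_const ε (fun t ↦ t) A, cfc_id' ℝ A, Algebra.algebraMap_eq_smul_one]
  have hlog : ContinuousOn Real.log ((fun t ↦ t + ε) '' spectrum ℝ A) := by
    refine Real.continuousOn_log.mono ?_
    rintro _ ⟨t, ht, rfl⟩
    exact (add_pos_of_mem_spectrum hA hε ht).ne'
  rw [cfc_comp' Real.log (fun t ↦ t + ε) A hlog, shift, opLog]

lemma fsDet_pos (B : H →L[ℂ] H) (x : H) : 0 < fsDet B x := Real.exp_pos _

lemma le_fsDet₀_iff {x : H} : r ≤ fsDet₀ A x ↔ ∀ ε : ℝ, 0 < ε → r ≤ fsDet (A + ε • 1) x :=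
  have : Nonempty {ε : ℝ // 0 < ε} := ⟨1, one_pos⟩
  (le_ciInf_iff ⟨0, Set.forall_mem_range.2 fun _ ↦ (fsDet_pos _ x).le⟩).trans Subtype.forall

lemma fsDet₀_le_fsDet_add_smul_one (A : H →L[ℂ] H) (x : H) (hε : 0 < ε) :
    fsDet₀ A x ≤ fsDet (A + ε • 1) x :=
  le_fsDet₀_iff.1 le_rfl ε hε

lemma forall_le_fsDet_add_smul_one_iff (hA : A.IsPositive) (hε : 0 < ε) :
    (∀ x : H, ‖x‖ = 1 → r ≤ fsDet (A + ε • 1) x) ↔ ∀ t ∈ spectrum ℝ A, r ≤ t + ε := by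
  rcases le_or_gt r 0 with hr | hr
  · exact iff_of_true (fun x _ ↦ hr.trans (fsDet_pos _ x).le) fun t ht ↦
      hr.trans (add_pos_of_mem_spectrum hA hε ht).le
  · simp only [fsDet, opLog_add_smul_one hA hε, ← Real.log_le_iff_le_exp hr]
    rw [forall_le_reApplyInnerSelf_cfc_iff hA.isSelfAdjoint
      (continuousOn_log_add_spectrum hA hε)]
    exact forall₂_congr fun t ht ↦ Real.log_le_log_iff hr (add_pos_of_mem_spectrum hA hε ht)

lemma forall_fsDet_add_smul_one_le_iff (hA : A.IsPositive) (hε : 0 < ε) (hr : 0 < r) :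
    (∀ x : H, ‖x‖ = 1 → fsDet (A + ε • 1) x ≤ r) ↔ ∀ t ∈ spectrum ℝ A, t + ε ≤ r := by
  simp only [fsDet, opLog_add_smul_one hA hε, ← Real.le_log_iff_exp_le hr]
  rw [forall_reApplyInnerSelf_cfc_le_iff hA.isSelfAdjoint
    (continuousOn_log_add_spectrum hA hε)]
  exact forall₂_congr fun t ht ↦
    Real.log_le_log_iff (add_pos_of_mem_spectrum hA hε ht) hr

lemma exists_norm_eq_one_le_fsDet₀ (hA : A.IsPositive) {c t : ℝ} (ht : t ∈ spectrum ℝ A)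
    (hct : c < t) : ∃ x : H, ‖x‖ = 1 ∧ c ≤ fsDet₀ A x := by
  obtain ⟨x, hx, hxg⟩ := exists_norm_eq_one_forall_le_reApplyInnerSelf_cfc hA.isSelfAdjoint
    isOpen_Ioi ⟨t, ht, hct⟩
  refine ⟨x, hx, le_fsDet₀_iff.2 fun ε hε ↦ ?_⟩
  rcases le_or_gt c 0 with hc | hc
  · exact hc.trans (fsDet_pos _ x).le
  · rw [fsDet, opLog_add_smul_one hA hε, ← Real.log_le_iff_le_exp hc]
    exact hxg _ _ (continuousOn_log_add_spectrum hA hε) fun s hs ↦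
      Real.log_le_log hc ((Set.mem_Ioi.1 hs.2).le.trans (le_add_of_nonneg_right hε.le))

lemma forall_le_fsDet₀_iff (hA : A.IsPositive) :
    (∀ x : H, ‖x‖ = 1 → r ≤ fsDet₀ A x) ↔ ∀ t ∈ spectrum ℝ A, r ≤ t := by
  calc (∀ x : H, ‖x‖ = 1 → r ≤ fsDet₀ A x)
    _ ↔ ∀ ε : ℝ, 0 < ε → ∀ x : H, ‖x‖ = 1 → r ≤ fsDet (A + ε • 1) x := by
      simp only [le_fsDet₀_iff]
      exact ⟨fun h ε hε x hx ↦ h x hx ε hε, fun h x hx ε hε ↦ h ε hε x hx⟩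
    _ ↔ ∀ ε : ℝ, 0 < ε → ∀ t ∈ spectrum ℝ A, r ≤ t + ε :=
      forall₂_congr fun _ hε ↦ forall_le_fsDet_add_smul_one_iff hA hε
    _ ↔ ∀ t ∈ spectrum ℝ A, r ≤ t :=
      ⟨fun h t ht ↦ le_of_forall_pos_le_add fun ε hε ↦ h ε hε t ht,
        fun h ε hε t ht ↦ (h t ht).trans (le_add_of_nonneg_right hε.le)⟩

lemma forall_fsDet₀_le_iff (hA : A.IsPositive) :
    (∀ x : H, ‖x‖ = 1 → fsDet₀ A x ≤ r) ↔ ∀ t ∈ spectrum ℝ A, t ≤ r := by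
  constructor
  · refine fun h t ht ↦ le_of_forall_lt_imp_le_of_dense fun c hct ↦ ?_
    obtain ⟨x, hx, hcx⟩ := exists_norm_eq_one_le_fsDet₀ hA ht hct
    exact hcx.trans (h x hx)
  · refine fun h x hx ↦ le_of_forall_pos_le_add fun ε hε ↦ ?_
    have : Nontrivial H := nontrivial_of_ne x 0 (ne_zero_of_norm_ne_zero (hx ▸ one_ne_zero))
    obtain ⟨t, ht⟩ := ContinuousFunctionalCalculus.spectrum_nonempty (R := ℝ) A hA.isSelfAdjoint
    have hr : 0 ≤ r := (nonneg_of_mem_spectrum hA ht).trans (h t ht)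
    have shifted_le : ∀ s ∈ spectrum ℝ A, s + ε ≤ r + ε := fun s hs ↦ by grw [h s hs]
    exact (fsDet₀_le_fsDet_add_smul_one A x hε).trans
      ((forall_fsDet_add_smul_one_le_iff hA hε (by positivity)).2 shifted_le x hx)

end Determinant

section ConditionallyCompleteLattice

variable {α ι : Type*} [ConditionallyCompleteLattice α] [Nonempty ι] {f : ι → α} {s : Set α}

lemma ciInf_eq_csInf_of_forall_le_iff (hne : s.Nonempty) (hs : BddBelow s)
    (h : ∀ r, (∀ i, r ≤ f i) ↔ ∀ t ∈ s, r ≤ t) : ⨅ i, f i = sInf s := by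
  refine IsGLB.ciInf_eq ((isGLB_congr ?_).2 (isGLB_csInf hne hs))
  ext r
  simpa only [mem_lowerBounds, Set.forall_mem_range] using h r

lemma ciSup_eq_csSup_of_forall_le_iff (hne : s.Nonempty) (hs : BddAbove s)
    (h : ∀ r, (∀ i, f i ≤ r) ↔ ∀ t ∈ s, t ≤ r) : ⨆ i, f i = sSup s :=
  ciInf_eq_csInf_of_forall_le_iff (α := αᵒᵈ) hne hs h

end ConditionallyCompleteLattice

/-- For a positive operator `A` on a nontrivial Hilbert space, the infimum
(resp. supremum) over unit vectors of `Δ_x(A)` and of `re⟪A x, x⟫` both equal the lower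
(resp. upper) endpoint of the spectrum of `A`, and `sup σ(A) = ‖A‖`. -/
theorem fujiiSeo_spectral_endpoints [Nontrivial H] (A : H →L[ℂ] H) (hA : A.IsPositive) :
    (⨅ x : {x : H // ‖x‖ = 1}, fsDet₀ A (x : H)) = sInf (spectrum ℝ A) ∧
    (⨅ x : {x : H // ‖x‖ = 1}, A.reApplyInnerSelf (x : H)) = sInf (spectrum ℝ A) ∧
    (⨆ x : {x : H // ‖x‖ = 1}, fsDet₀ A (x : H)) = sSup (spectrum ℝ A) ∧
    (⨆ x : {x : H // ‖x‖ = 1}, A.reApplyInnerSelf (x : H)) = sSup (spectrum ℝ A) ∧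
    sSup (spectrum ℝ A) = ‖A‖ := by
  have hsa : IsSelfAdjoint A := hA.isSelfAdjoint
  have hne : (spectrum ℝ A).Nonempty := ContinuousFunctionalCalculus.spectrum_nonempty A hsa
  have hcpt : IsCompact (spectrum ℝ A) := spectrum.isCompact A
  have norm_isGreatest : IsGreatest (spectrum ℝ A) ‖A‖ :=
    ⟨CStarAlgebra.norm_mem_spectrum_of_nonneg ((nonneg_iff_isPositive A).2 hA),
      fun t ht ↦ (le_abs_self t).trans (spectrum.norm_le_norm_of_mem ht)⟩
  have : Nonempty {x : H // ‖x‖ = 1} := nonempty_subtype.2 (exists_norm_eq H zero_le_one)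
  refine ⟨?_, ?_, ?_, ?_, norm_isGreatest.csSup_eq⟩
  · exact ciInf_eq_csInf_of_forall_le_iff hne hcpt.bddBelow fun _ ↦
      Subtype.forall.trans (forall_le_fsDet₀_iff hA)
  · exact ciInf_eq_csInf_of_forall_le_iff hne hcpt.bddBelow fun _ ↦
      Subtype.forall.trans (forall_le_reApplyInnerSelf_iff hsa)
  · exact ciSup_eq_csSup_of_forall_le_iff hne hcpt.bddAbove fun _ ↦
      Subtype.forall.trans (forall_fsDet₀_le_iff hA)
  · exact ciSup_eq_csSup_of_forall_le_iff hne hcpt.bddAbove fun _ ↦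
      Subtype.forall.trans (forall_reApplyInnerSelf_le_iff hsa)
end
end

section
/- Let H be a complex Hilbert space, let A, B be strictly positive bounded operators on H, and suppose m·I ≤ B ≤ M·I for some 0 < m ≤ M. If for every p > 0 one has ((M^p + m^p)²/(4·M^p·m^p))·A^p ≥ B^p, then log A ≥ log B. -/
noncomputable section

open ContinuousLinearMap

variable {H : Type*} [NormedAddCommGroup H] [InnerProductSpace ℂ H] [CompleteSpace H]

/-- The operator power `A^p`, defined via the continuous functional calculus. -/
def opPow (A : H →L[ℂ] H) (p : ℝ) : H →L[ℂ] H := cfc (fun t : ℝ => t ^ p) A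

/-!
By operator monotonicity of the logarithm, `b ^ p ≤ K p • a ^ p` gives
`log b ≤ p⁻¹ log (K p) + log a`. The Kantorovich constant `(x + y)² / (4 x y)` attains its minimum
`1` on the diagonal, so along `x = m ^ p`, `y = M ^ p` it is `1 + o(p)` as `p → 0`, and the scalar
error term vanishes in the limit.
-/

section LogOrder

open Filter Topology

lemma cfcLog_rpow {A : Type*} [NormedRing A] [StarRing A] [NormedAlgebra ℝ A]
    [ContinuousFunctionalCalculus ℝ A IsSelfAdjoint] [PartialOrder A] [StarOrderedRing A]
    [NonnegSpectrumClass ℝ A] {a : A} (ha : IsStrictlyPositive a) (p : ℝ) :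
    CFC.log (a ^ p) = p • CFC.log a := by
  have hpos : ∀ x ∈ spectrum ℝ a, 0 < x := fun _ hx ↦ ha.spectrum_pos hx
  have hpow : ContinuousOn (fun x : ℝ ↦ x ^ p) (spectrum ℝ a) := fun x hx ↦
    (Real.continuousAt_rpow_const x p (.inl (hpos x hx).ne')).continuousWithinAt
  have hlog : ContinuousOn Real.log (spectrum ℝ a) :=
    Real.continuousOn_log.mono fun x hx ↦ (hpos x hx).ne'
  have hlog_pow : ContinuousOn Real.log ((fun x : ℝ ↦ x ^ p) '' spectrum ℝ a) := by
    refine Real.continuousOn_log.mono ?_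
    rintro _ ⟨x, hx, rfl⟩
    exact (Real.rpow_pos_of_pos (hpos x hx) p).ne'
  calc CFC.log (a ^ p)
      = cfc (fun x : ℝ ↦ Real.log (x ^ p)) a := by
        rw [CFC.rpow_eq_cfc_real ha.nonneg, CFC.log, cfc_comp' Real.log (· ^ p) a hlog_pow hpow]
    _ = cfc (fun x : ℝ ↦ p • Real.log x) a := cfc_congr fun x hx ↦ Real.log_rpow (hpos x hx) p
    _ = p • CFC.log a := cfc_smul p Real.log a hlog

variable {A : Type*} [CStarAlgebra A] [PartialOrder A] [StarOrderedRing A] {a b : A}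

lemma cfcLog_le_algebraMap_add_of_rpow_le_smul_rpow (ha : IsStrictlyPositive a)
    (hb : IsStrictlyPositive b) {p c : ℝ} (hp : 0 < p) (hc : 0 < c) (h : b ^ p ≤ c • a ^ p) :
    CFC.log b ≤ algebraMap ℝ A (p⁻¹ * Real.log c) + CFC.log a := by
  have hlog : p • CFC.log b ≤ algebraMap ℝ A (Real.log c) + p • CFC.log a := by
    have hmono := CFC.log_le_log h (hb.rpow b p)
    rwa [CFC.log_smul' (a ^ p) hc (ha.rpow a p), cfcLog_rpow ha, cfcLog_rpow hb] at hmono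
  calc CFC.log b = p⁻¹ • p • CFC.log b := (inv_smul_smul₀ hp.ne' _).symm
    _ ≤ p⁻¹ • (algebraMap ℝ A (Real.log c) + p • CFC.log a) := by gcongr
    _ = algebraMap ℝ A (p⁻¹ * Real.log c) + CFC.log a := by
      rw [smul_add, inv_smul_smul₀ hp.ne', Algebra.algebraMap_eq_smul_one,
        Algebra.algebraMap_eq_smul_one, mul_smul]

lemma cfcLog_le_cfcLog_of_frequently_rpow_le_smul_rpow (ha : IsStrictlyPositive a)
    (hb : IsStrictlyPositive b) {K : ℝ → ℝ} (hK_pos : ∀ᶠ p in 𝓝[>] 0, 0 < K p)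
    (hK : Tendsto (fun p ↦ p⁻¹ * Real.log (K p)) (𝓝[>] 0) (𝓝 0))
    (h : ∃ᶠ p in 𝓝[>] 0, b ^ p ≤ K p • a ^ p) :
    CFC.log b ≤ CFC.log a := by
  have hlim : Tendsto (fun p ↦ algebraMap ℝ A (p⁻¹ * Real.log (K p)) + CFC.log a) (𝓝[>] 0)
      (𝓝 (CFC.log a)) := by
    simpa using (((algebraMapCLM ℝ A).continuous.tendsto 0).comp hK).add_const (CFC.log a)
  refine ge_of_tendsto_of_frequently hlim ?_
  refine (h.and_eventually (hK_pos.and eventually_mem_nhdsWithin)).mono ?_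
  rintro p ⟨hle, hKp, hp⟩
  exact cfcLog_le_algebraMap_add_of_rpow_le_smul_rpow ha hb hp hKp hle

end LogOrder

section KantorovichConst

open Filter Topology

/-- The Kantorovich constant `(y + x)² / (4 y x)` of the interval `[x, y]`, `0 < x ≤ y`: the best
constant `K` in `⟪T v, v⟫ ⟪T⁻¹ v, v⟫ ≤ K` for operators `x ≤ T ≤ y` and unit vectors `v`. It
serves here as the scalar factor allowed in `b ^ p ≤ K • a ^ p`. -/
def kantorovichConst (x y : ℝ) : ℝ := (y + x) ^ 2 / (4 * y * x)

lemma kantorovichConst_self {x : ℝ} (hx : x ≠ 0) : kantorovichConst x x = 1 := by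
  unfold kantorovichConst
  field_simp
  norm_num

lemma one_le_kantorovichConst {x y : ℝ} (hx : 0 < x) (hy : 0 < y) : 1 ≤ kantorovichConst x y := by
  rw [kantorovichConst, one_le_div (by positivity)]
  linarith [four_mul_le_sq_add y x]

variable {m M : ℝ}

lemma hasDerivAt_kantorovichConst_rpow_zero (hm : 0 < m) (hM : 0 < M) :
    HasDerivAt (fun p : ℝ ↦ kantorovichConst (m ^ p) (M ^ p)) 0 0 := by
  have hdiff : DifferentiableAt ℝ (fun p : ℝ ↦ kantorovichConst (m ^ p) (M ^ p)) 0 := by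
    have hm' := ((hasDerivAt_id (0 : ℝ)).const_rpow hm).differentiableAt
    have hM' := ((hasDerivAt_id (0 : ℝ)).const_rpow hM).differentiableAt
    exact ((hM'.add hm').pow 2).div ((hM'.const_mul 4).mul hm') (by simp)
  have hmin : IsLocalMin (fun p : ℝ ↦ kantorovichConst (m ^ p) (M ^ p)) 0 :=
    .of_forall fun p ↦ by
      simpa only [Real.rpow_zero, kantorovichConst_self one_ne_zero] using
        one_le_kantorovichConst (Real.rpow_pos_of_pos hm p) (Real.rpow_pos_of_pos hM p)
  simpa only [hmin.deriv_eq_zero] using hdiff.hasDerivAt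

lemma tendsto_inv_mul_log_kantorovichConst_rpow (hm : 0 < m) (hM : 0 < M) :
    Tendsto (fun p : ℝ ↦ p⁻¹ * Real.log (kantorovichConst (m ^ p) (M ^ p))) (𝓝[>] 0) (𝓝 0) := by
  have hone : kantorovichConst 1 1 = 1 := kantorovichConst_self one_ne_zero
  have hderiv : HasDerivAt (fun p : ℝ ↦ Real.log (kantorovichConst (m ^ p) (M ^ p))) 0 0 := by
    simpa [hone] using (hasDerivAt_kantorovichConst_rpow_zero hm hM).log (by simp [hone])
  simpa [hone] using hderiv.tendsto_slope_zero_right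

theorem weak_kantorovich_implies_chaotic_order_general {A : Type*} [CStarAlgebra A]
    [PartialOrder A] [StarOrderedRing A] {a b : A} (ha : IsStrictlyPositive a)
    (hb : IsStrictlyPositive b) (hm : 0 < m) (hM : 0 < M)
    (h : ∃ᶠ p in 𝓝[>] (0 : ℝ), b ^ p ≤ kantorovichConst (m ^ p) (M ^ p) • a ^ p) :
    CFC.log b ≤ CFC.log a :=
  cfcLog_le_cfcLog_of_frequently_rpow_le_smul_rpow ha hb
    (.of_forall fun p ↦ zero_lt_one.trans_le <|
      one_le_kantorovichConst (Real.rpow_pos_of_pos hm p) (Real.rpow_pos_of_pos hM p))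
    (tendsto_inv_mul_log_kantorovichConst_rpow hm hM) h

end KantorovichConst

lemma opPow_eq_rpow {A : H →L[ℂ] H} (hA : A.IsPositive) (p : ℝ) : opPow A p = A ^ p :=
  (CFC.rpow_eq_cfc_real ((nonneg_iff_isPositive A).2 hA)).symm

/-- The weak Kantorovich inequality for all `p > 0` implies the chaotic
order `log A ≥ log B`. -/
theorem weak_kantorovich_implies_chaotic_order
    (A B : H →L[ℂ] H) (m M : ℝ) (hm : 0 < m) (hmM : m ≤ M)
    (hA : A.IsPositive) (hAu : IsUnit A) (hB : B.IsPositive) (hBu : IsUnit B)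
    (hlow : (B - m • 1).IsPositive) (hupp : (M • 1 - B).IsPositive)
    (hkant : ∀ p : ℝ, 0 < p →
      ((((M ^ p + m ^ p) ^ 2 / (4 * M ^ p * m ^ p)) • opPow A p) - opPow B p).IsPositive) :
    (opLog A - opLog B).IsPositive := by
  simp only [opPow_eq_rpow hA, opPow_eq_rpow hB] at hkant
  exact weak_kantorovich_implies_chaotic_order_general
    ⟨(nonneg_iff_isPositive A).2 hA, hAu⟩ ⟨(nonneg_iff_isPositive B).2 hB, hBu⟩ hm
    (hm.trans_le hmM) (Filter.Eventually.frequently (eventually_mem_nhdsWithin.mono hkant))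
end
end

section
/- Let H be a complex Hilbert space and let A be a bounded positive operator on H with 0 ∈ σ(A). Define u(z) := re⟪A z, z⟫. Then for every bounded open set G ⊂ H with 0 ∈ G, the infimum over ξ in the boundary of G of u(ξ) equals 0. -/
noncomputable section

open ContinuousLinearMap

variable {H : Type*} [NormedAddCommGroup H] [InnerProductSpace ℂ H] [CompleteSpace H]

/-!
A non-invertible operator `A` is not coercive (Lax–Milgram), so for every `c > 0` some `x ≠ 0`
satisfies `‖⟪A x, x⟫‖ < c ‖x‖²`. The line through `0` and `x` leaves the bounded set `G`, hence it
crosses the boundary of `G` at some `a • x`; there the form, being homogeneous of degree two, has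
modulus at most `c ‖a • x‖²`, which is small because the boundary of `G` is bounded.
-/

section Frontier

variable {𝕜 E : Type*} [NontriviallyNormedField 𝕜] [NormedAddCommGroup E] [NormedSpace 𝕜 E]

theorem exists_add_smul_notMem_of_isBounded {G : Set E} (hG : Bornology.IsBounded G)
    (p : E) {v : E} (hv : v ≠ 0) : ∃ a : 𝕜, p + a • v ∉ G := by
  obtain ⟨R, hR⟩ := hG.exists_norm_le
  obtain ⟨a, ha⟩ := NormedField.exists_lt_norm 𝕜 ((R + ‖p‖) / ‖v‖)
  refine ⟨a, fun haG => ?_⟩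
  have h_far : R + ‖p‖ < ‖a • v‖ := by
    rwa [norm_smul, ← div_lt_iff₀ (norm_pos_iff.mpr hv)]
  have h_tri : ‖a • v‖ ≤ ‖p + a • v‖ + ‖p‖ := by
    simpa using norm_sub_le (p + a • v) p
  linarith [hR _ haG]

theorem exists_add_smul_mem_frontier_of_isBounded [PreconnectedSpace 𝕜] {G : Set E}
    (hG : Bornology.IsBounded G) {p : E} (hp : p ∈ G) {v : E} (hv : v ≠ 0) :
    ∃ a : 𝕜, p + a • v ∈ frontier G := by
  let line : 𝕜 → E := fun a => p + a • v
  have h_cont : Continuous line := by fun_prop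
  obtain ⟨b, hb⟩ := exists_add_smul_notMem_of_isBounded (𝕜 := 𝕜) hG p hv
  have h_frontier : (frontier (line ⁻¹' G)).Nonempty :=
    nonempty_frontier_iff.mpr
      ⟨⟨0, by simpa [line] using hp⟩, (Set.ne_univ_iff_exists_notMem _).mpr ⟨b, hb⟩⟩
  obtain ⟨a, ha⟩ := h_frontier
  exact ⟨a, h_cont.frontier_preimage_subset G ha⟩

end Frontier

section Operator

variable {𝕜 E : Type*} [RCLike 𝕜] [NormedAddCommGroup E] [InnerProductSpace 𝕜 E]

theorem norm_inner_map_self_smul (A : E →ₗ[𝕜] E) (a : 𝕜) (x : E) :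
    ‖inner 𝕜 (A (a • x)) (a • x)‖ = ‖a‖ ^ 2 * ‖inner 𝕜 (A x) x‖ := by
  simp only [map_smul, inner_smul_left, inner_smul_right, norm_mul, RCLike.norm_conj]
  ring

variable [CompleteSpace E] {A : E →L[𝕜] E}

theorem exists_norm_inner_map_self_lt_of_not_isUnit (hA : ¬IsUnit A) {c : ℝ} (hc : 0 < c) :
    ∃ x, ‖inner 𝕜 (A x) x‖ < c * ‖x‖ ^ 2 := by
  contrapose! hA
  refine isUnit_of_forall_le_norm_inner_map A (c := ⟨c, hc.le⟩) hc fun x => ?_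
  exact (mul_comm _ c).trans_le (hA x)

theorem exists_mem_frontier_norm_inner_map_self_lt (hA : ¬IsUnit A) {G : Set E}
    (hG : Bornology.IsBounded G) (h0 : 0 ∈ G) {ε : ℝ} (hε : 0 < ε) :
    ∃ ξ ∈ frontier G, ‖inner 𝕜 (A ξ) ξ‖ < ε := by
  obtain ⟨R, hR_pos, hR⟩ := hG.closure.exists_pos_norm_lt
  obtain ⟨x, hx⟩ := exists_norm_inner_map_self_lt_of_not_isUnit hA (c := ε / R ^ 2) (by positivity)
  have hx_ne : x ≠ 0 := by
    rintro rfl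
    simp at hx
  obtain ⟨a, ha⟩ := exists_add_smul_mem_frontier_of_isBounded (𝕜 := 𝕜) hG h0 hx_ne
  rw [zero_add] at ha
  refine ⟨a • x, ha, ?_⟩
  calc ‖inner 𝕜 (A (a • x)) (a • x)‖ = ‖a‖ ^ 2 * ‖inner 𝕜 (A x) x‖ :=
        norm_inner_map_self_smul A.toLinearMap a x
    _ ≤ ‖a‖ ^ 2 * (ε / R ^ 2 * ‖x‖ ^ 2) := by gcongr
    _ = ε / R ^ 2 * ‖a • x‖ ^ 2 := by rw [norm_smul]; ring
    _ < ε / R ^ 2 * R ^ 2 := by gcongr; exact hR _ (frontier_subset_closure ha)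
    _ = ε := div_mul_cancel₀ ε (by positivity)

theorem quadratic_boundary_infimum_zero_general (hA_nonneg : ∀ x, 0 ≤ A.reApplyInnerSelf x)
    (hA : ¬IsUnit A) {G : Set E} (hG : Bornology.IsBounded G) (h0 : 0 ∈ G) :
    IsGLB (A.reApplyInnerSelf '' frontier G) 0 := by
  refine ⟨Set.forall_mem_image.mpr fun ξ _ => hA_nonneg ξ, fun b hb => ?_⟩
  refine le_of_forall_pos_le_add fun ε hε => ?_
  obtain ⟨ξ, hξ, hξ_lt⟩ := exists_mem_frontier_norm_inner_map_self_lt hA hG h0 hε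
  calc b ≤ A.reApplyInnerSelf ξ := hb (Set.mem_image_of_mem _ hξ)
    _ ≤ ‖inner 𝕜 (A ξ) ξ‖ := RCLike.re_le_norm _
    _ ≤ 0 + ε := by simpa using hξ_lt.le

end Operator

/-- If `A` is positive with `0 ∈ σ(A)` and `u z = re⟪A z, z⟫`, then for
every bounded open set `G` containing `0`, the infimum of `u` over the boundary of `G`
equals `0`. -/
theorem quadratic_boundary_infimum_zero
    (A : H →L[ℂ] H) (hA : A.IsPositive) (h0 : (0 : ℝ) ∈ spectrum ℝ A) :
    ∀ G : Set H, IsOpen G → Bornology.IsBounded G → (0 : H) ∈ G →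
      sInf ((fun ξ => A.reApplyInnerSelf ξ) '' frontier G) = 0 := by
  intro G _ hG h0G
  have h_glb :=
    quadratic_boundary_infimum_zero_general hA.2 ((spectrum.zero_mem_iff ℝ).mp h0) hG h0G
  exact h_glb.csInf_eq h_glb.nonempty
end
end
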